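/- Assume s(f) = k for some fixed k ∈ ℕ, k ≥ 1, and n(f) = 1 for every file f. Then for every schedule B1 there exists a schedule B1' consisting solely of atomic mini-batches such that v(B1') ≤ v(B1). -/

import Mathlib

/-!
When all files have the same size `k` and one request each, the empty schedule is optimal, and it
consists (vacuously) of atomic mini-batches.

Under the empty schedule file `f` has response time `m + L(f)`, where `L` denotes the left edge.
In an arbitrary schedule `B`, a file `f` first served inside `b` gains `2 L(b)` over that time, and
loses `2 s(b')` for each `b'` executed before `b`, hence at least for each `b'` lying strictly to
the right of `f`; a file left to Phase 2 gains nothing and loses `2 s(b')` for every `b'`.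
Bounding the gain by the sum over all batches covering `f` yields `resp_ge`. In the sum of these
bounds over `f` (see `sum_gain_eq_sum_loss`), a batch `b` contributes
`2 L(b) * (number of files in b)` to the gain and `2 s(b) * (number of files left of b)` to the
loss. For files of equal size `k` the number of files in `b` is `s(b) / k` and the number of files
left of `b` is `L(b) / k`, so these two contributions cancel.
-/

open Finset

namespace LTSP

variable (N : ℕ) (s : Fin N → ℕ) (n : Fin N → ℕ)

/-- Left edge (0-based coordinate) of file `f`: file `f` occupies the blocks
`leftPos f + 1, …, leftPos f + s f` of the tape. -/
def leftPos (f : Fin N) : ℕ := ∑ j ∈ Finset.Iio f, s j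

/-- Leftmost block of file `f`: `l(f) = 1 + ∑_{j<f} s j`. -/
def lB (f : Fin N) : ℕ := 1 + leftPos N s f

/-- Tape length `m = ∑ s f`. -/
def tapeLen : ℕ := ∑ j, s j

/-- Left edge `l(b)` (0-based coordinate) of a mini-batch `b = (b.1, b.2)`. -/
def Lb (b : Fin N × Fin N) : ℕ := leftPos N s b.1

/-- Right edge of a mini-batch; numerically this equals its rightmost block `r(b)`. -/
def Rb (b : Fin N × Fin N) : ℕ := leftPos N s b.2 + s b.2

/-- Size of a mini-batch: `s(b) = r(b) - l(b) + 1`. -/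
def sb (b : Fin N × Fin N) : ℕ := Rb N s b - Lb N s b

/-- `f ∈ F(b)` : file `f` is contained in the mini-batch `b`. -/
def Covers (b : Fin N × Fin N) (f : Fin N) : Prop := b.1 ≤ f ∧ f ≤ b.2

/-- `f ∈ F(B)` : file `f` is traversed by some mini-batch of the schedule `B`. -/
def InF (B : Finset (Fin N × Fin N)) (f : Fin N) : Prop := ∃ b ∈ B, Covers N b f

/-- A schedule is a finite set of mini-batches, i.e. pairs `(f, f')` with `f ≤ f'`. -/
def Valid (B : Finset (Fin N × Fin N)) : Prop := ∀ b ∈ B, b.1 ≤ b.2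

/-- `b'` is executed strictly before `b`: mini-batches are executed in decreasing order
of their leftmost blocks, ties broken by executing larger mini-batches first. -/
def ExecBefore (b' b : Fin N × Fin N) : Prop :=
  Lb N s b < Lb N s b' ∨ (Lb N s b' = Lb N s b ∧ Rb N s b < Rb N s b')

open scoped Classical in
/-- Time step at which the read movement of mini-batch `b ∈ B` begins: the head starts at
position `m` at time `0`, moves left one block per time step, and detours `2 s(b')` time
steps for every mini-batch `b'` executed before `b`. -/
noncomputable def startTime (B : Finset (Fin N × Fin N)) (b : Fin N × Fin N) : ℕ :=
  (tapeLen N s - Lb N s b) + 2 * ∑ b' ∈ B.filter (fun b' => ExecBefore N s b' b), sb N s b'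

/-- Time step at which the left-to-right traversal of file `f` within the read movement
of mini-batch `b` begins. -/
noncomputable def travTime (B : Finset (Fin N × Fin N)) (f : Fin N) (b : Fin N × Fin N) : ℕ :=
  startTime N s B b + (leftPos N s f - Lb N s b)

/-- Time step at which Phase 2 begins (the head has descended the whole tape, detouring
`2 s(b)` time steps for each executed mini-batch). -/
noncomputable def phase2Start (B : Finset (Fin N × Fin N)) : ℕ :=
  tapeLen N s + 2 * ∑ b ∈ B, sb N s b

open scoped Classical in
/-- Response time of the requests of file `f` under schedule `B`: the time step at which the
first complete left-to-right traversal of `f` begins (within the first mini-batch of `B`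
containing `f` if one exists, and during Phase 2 otherwise). -/
noncomputable def resp (B : Finset (Fin N × Fin N)) (f : Fin N) : ℕ :=
  if h : (B.filter (fun b => Covers N b f)).Nonempty then
    (B.filter (fun b => Covers N b f)).inf' h (travTime N s B f)
  else phase2Start N s B + leftPos N s f

/-- Objective value of a schedule: the sum of the response times of all requests
(file `f` contributes `n f` times its response time). -/
noncomputable def v (B : Finset (Fin N × Fin N)) : ℕ :=
  ∑ f, n f * resp N s B f

/-- A schedule is optimal if its objective value is minimum among all schedules. -/
def Optimal (B : Finset (Fin N × Fin N)) : Prop :=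
  Valid N B ∧ ∀ B' : Finset (Fin N × Fin N), Valid N B' → v N s n B ≤ v N s n B'

open scoped Classical in
/-- Left-hand side of Inequalities (1)/(2): `n(f)·(l(f) + ∑_{b ∈ B, r(b) < l(f)} s(b))`. -/
noncomputable def ineqLHS (B : Finset (Fin N × Fin N)) (f : Fin N) : ℕ :=
  n f * (lB N s f + ∑ b ∈ B.filter (fun b => Rb N s b < lB N s f), sb N s b)

open scoped Classical in
/-- Right-hand side of Inequalities (1)/(2):
`s(f)·(∑_{f', l(f') < l(f)} n(f') + ∑_{f' ∉ F(B), l(f') > l(f)} n(f'))`. -/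
noncomputable def ineqRHS (B : Finset (Fin N × Fin N)) (f : Fin N) : ℕ :=
  s f * ((∑ f' ∈ Finset.univ.filter (fun f' => lB N s f' < lB N s f), n f') +
    ∑ f' ∈ Finset.univ.filter (fun f' => ¬ InF N B f' ∧ lB N s f < lB N s f'), n f')

/-- Inequality (1). -/
def Ineq1 (B : Finset (Fin N × Fin N)) (f : Fin N) : Prop :=
  ineqRHS N s n B f < ineqLHS N s n B f

/-- Inequality (2). -/
def Ineq2 (B : Finset (Fin N × Fin N)) (f : Fin N) : Prop :=
  ineqLHS N s n B f < ineqRHS N s n B f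

/-- The Greedy Strategy schedule: one atomic mini-batch `(f, f)` for every file with at
least one request, except the leftmost file of the tape. -/
def GS (hN : 0 < N) : Finset (Fin N × Fin N) :=
  (Finset.univ.filter (fun f : Fin N => 0 < n f ∧ f ≠ ⟨0, hN⟩)).image (fun f => (f, f))

theorem leftPos_eq {k : ℕ} (hs : ∀ f, s f = k) (f : Fin N) : leftPos N s f = f.val * k := by
  simp [leftPos, hs]

theorem sb_eq {k : ℕ} (hs : ∀ f, s f = k) (b : Fin N × Fin N) :
    sb N s b = (b.2.val + 1 - b.1.val) * k := by
  simp only [sb, Rb, Lb, leftPos_eq N s hs, hs, Nat.sub_mul, Nat.add_mul, one_mul]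

theorem resp_empty (f : Fin N) : resp N s ∅ f = tapeLen N s + leftPos N s f := by
  simp [resp, phase2Start]

open scoped Classical in
/-- Compared with the empty schedule, a file gains at most twice the left edges of the batches
covering it, and loses at least twice the sizes of the batches strictly to its right. -/
theorem resp_ge {k : ℕ} (hk : 1 ≤ k) (hs : ∀ f, s f = k) (B : Finset (Fin N × Fin N))
    (f : Fin N) :
    tapeLen N s + leftPos N s f + 2 * ∑ b ∈ B with f < b.1, sb N s b ≤
      resp N s B f + 2 * ∑ b ∈ B with Covers N b f, Lb N s b := by
  unfold resp
  split_ifs with h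
  · obtain ⟨b, hb, he⟩ := Finset.exists_mem_eq_inf' h (travTime N s B f)
    rw [he]
    have hgain : Lb N s b ≤ ∑ b ∈ B with Covers N b f, Lb N s b :=
      Finset.single_le_sum (f := Lb N s) (fun _ _ => Nat.zero_le _) hb
    have hbf : b.1 ≤ f := (Finset.mem_filter.mp hb).2.1
    have hloss : ∑ b' ∈ B with f < b'.1, sb N s b' ≤
        ∑ b' ∈ B with ExecBefore N s b' b, sb N s b' := by
      refine Finset.sum_le_sum_of_subset fun b' hb' => ?_
      rw [Finset.mem_filter] at hb' ⊢
      refine ⟨hb'.1, Or.inl ?_⟩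
      simp only [Lb, leftPos_eq N s hs]
      exact Nat.mul_lt_mul_of_pos_right (lt_of_le_of_lt hbf hb'.2) hk
    unfold travTime startTime
    omega
  · have hloss : ∑ b' ∈ B with f < b'.1, sb N s b' ≤ ∑ b' ∈ B, sb N s b' :=
      Finset.sum_le_sum_of_subset (Finset.filter_subset _ _)
    unfold phase2Start
    omega

open scoped Classical in
/-- Total gain and total loss agree: both equal the sum over the batches of `L(b) * s(b) / k`,
once double counting has moved the sum over files inside. -/
theorem sum_gain_eq_sum_loss {k : ℕ} (hs : ∀ f, s f = k) (B : Finset (Fin N × Fin N)) :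
    ∑ f, ∑ b ∈ B with Covers N b f, Lb N s b = ∑ f, ∑ b ∈ B with f < b.1, sb N s b := by
  simp only [Finset.sum_filter]
  rw [Finset.sum_comm, Finset.sum_comm (s := Finset.univ)]
  refine Finset.sum_congr rfl fun b _ => ?_
  have hcov : (Finset.univ.filter fun f => Covers N b f) = Finset.Icc b.1 b.2 := by
    ext f
    rw [Finset.mem_filter, Finset.mem_Icc]
    simp [Covers]
  have hleft : (Finset.univ.filter fun f => f < b.1) = Finset.Iio b.1 := by
    ext f
    simp
  rw [← Finset.sum_filter, ← Finset.sum_filter, hcov, hleft]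
  simp only [Finset.sum_const, Fin.card_Icc, Fin.card_Iio, smul_eq_mul, Lb, leftPos_eq N s hs,
    sb_eq N s hs]
  ring

/-- If all files have the same size `k ≥ 1` and exactly one request each, then for every
schedule there is a schedule consisting solely of atomic mini-batches that is at least as
good. -/
theorem stmt15 (k : ℕ) (hk : 1 ≤ k) (hs : ∀ f, s f = k) (hn : ∀ f, n f = 1)
    (B1 : Finset (Fin N × Fin N)) (hB : Valid N B1) :
    ∃ B1' : Finset (Fin N × Fin N), Valid N B1' ∧ (∀ b ∈ B1', b.1 = b.2) ∧
      v N s n B1' ≤ v N s n B1 := by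
  classical
  refine ⟨∅, by simp [Valid], by simp, ?_⟩
  simp only [v, hn, one_mul, resp_empty]
  have h := Finset.sum_le_sum fun f (_ : f ∈ Finset.univ) => resp_ge N s hk hs B1 f
  rw [Finset.sum_add_distrib, Finset.sum_add_distrib (g := fun f => 2 * _), ← Finset.mul_sum,
    ← Finset.mul_sum, sum_gain_eq_sum_loss N s hs] at h
  exact Nat.le_of_add_le_add_right h

end LTSP
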